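/- Let C be a group system, t ∈ ℤ, and k ≥ 1. Then Δ_{k−1}^t is a normal subgroup of Δ_k^t, and for every j with 0 ≤ j ≤ k there are isomorphisms Δ_k^t/Δ_{k−1}^t ≅ π^{[t,t+k]}(D_k^t)/π^{[t,t+k]}(D_{k−1}^t) ≅ β^{t+j}(D_k^t)/β^{t+j}(D_{k−1}^t). In particular, all the quotient groups β^{t+j}(D_k^t)/β^{t+j}(D_{k−1}^t) for 0 ≤ j ≤ k have the same cardinality. -/

import Mathlib

open scoped Pointwise

namespace GroupSystemPaper

variable {A : ℤ → Type*} [∀ t, Group (A t)]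

/-- `C^{t+}` : codewords of the group system `C` that are the identity before time `t`. -/
def Cplus (C : Subgroup (∀ t, A t)) (t : ℤ) : Subgroup C where
  carrier := {a | ∀ n < t, (a : ∀ s, A s) n = 1}
  one_mem' := by intro n hn; simp
  mul_mem' := by intro a b ha hb n hn; simp [ha n hn, hb n hn]
  inv_mem' := by intro a ha n hn; simp [ha n hn]

/-- `C^{t−}` : codewords of the group system `C` that are the identity from time `t` on. -/
def Cminus (C : Subgroup (∀ t, A t)) (t : ℤ) : Subgroup C where
  carrier := {a | ∀ n, t ≤ n → (a : ∀ s, A s) n = 1}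
  one_mem' := by intro n hn; simp
  mul_mem' := by intro a b ha hb n hn; simp [ha n hn, hb n hn]
  inv_mem' := by intro a ha n hn; simp [ha n hn]

/-- `C^{[t₁,t₂]}` : codewords supported on the interval `[t₁, t₂]`. -/
def Cint (C : Subgroup (∀ t, A t)) (t₁ t₂ : ℤ) : Subgroup C :=
  Cplus C t₁ ⊓ Cminus C (t₂ + 1)

instance Cplus_normal (C : Subgroup (∀ t, A t)) (t : ℤ) : (Cplus C t).Normal := by
  constructor
  intro x hx g n hn
  have h1 : (x : ∀ s, A s) n = 1 := hx n hn
  simp [h1]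

instance Cminus_normal (C : Subgroup (∀ t, A t)) (t : ℤ) : (Cminus C t).Normal := by
  constructor
  intro x hx g n hn
  have h1 : (x : ∀ s, A s) n = 1 := hx n hn
  simp [h1]

instance Cint_normal (C : Subgroup (∀ t, A t)) (t₁ t₂ : ℤ) : (Cint C t₁ t₂).Normal := by
  constructor
  intro x hx g
  rcases Subgroup.mem_inf.mp hx with ⟨h1, h2⟩
  exact Subgroup.mem_inf.mpr
    ⟨(Cplus_normal C t₁).conj_mem _ h1 g, (Cminus_normal C (t₂ + 1)).conj_mem _ h2 g⟩

/-- The normal subgroup `C^{t−}C^{t+}` of `C`. -/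
def stateN (C : Subgroup (∀ t, A t)) (t : ℤ) : Subgroup C :=
  Cminus C t ⊔ Cplus C t

instance stateN_normal (C : Subgroup (∀ t, A t)) (t : ℤ) : (stateN C t).Normal :=
  Subgroup.sup_normal _ _

/-- The canonical state space `Σ^t = C/(C^{t−}C^{t+})`. -/
abbrev State (C : Subgroup (∀ t, A t)) (t : ℤ) : Type _ :=
  ↥C ⧸ stateN C t

/-- The state projection `σ^t : C → Σ^t`. -/
def sigma (C : Subgroup (∀ t, A t)) (t : ℤ) : ↥C →* State C t :=
  QuotientGroup.mk' (stateN C t)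

/-- The evaluation homomorphism `χ^t : C → A^t`. -/
def evalHom (C : Subgroup (∀ t, A t)) (t : ℤ) : ↥C →* A t :=
  (Pi.evalMonoidHom A t).comp C.subtype

/-- The branch homomorphism `β^t : C → Σ^t × A^t × Σ^{t+1}`. -/
def beta (C : Subgroup (∀ t, A t)) (t : ℤ) :
    ↥C →* State C t × A t × State C (t + 1) :=
  (sigma C t).prod ((evalHom C t).prod (sigma C (t + 1)))

/-- The branch group `B^t = β^t(C)`. -/
def Branch (C : Subgroup (∀ t, A t)) (t : ℤ) :
    Subgroup (State C t × A t × State C (t + 1)) :=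
  (beta C t).range

/-- `β^t` with codomain restricted to the branch group `B^t`. -/
def betaRes (C : Subgroup (∀ t, A t)) (t : ℤ) : ↥C →* ↥(Branch C t) :=
  (beta C t).rangeRestrict

/-- `X_j^t = β^t(C^{(t−j)+})` as a subgroup of the branch group `B^t`. -/
def X (C : Subgroup (∀ t, A t)) (j t : ℤ) : Subgroup ↥(Branch C t) :=
  (Cplus C (t - j)).map (betaRes C t)

/-- `Y_i^t = β^t(C^{(t+i+1)−})` as a subgroup of the branch group `B^t`. -/
def Y (C : Subgroup (∀ t, A t)) (i t : ℤ) : Subgroup ↥(Branch C t) :=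
  (Cminus C (t + i + 1)).map (betaRes C t)

instance X_normal (C : Subgroup (∀ t, A t)) (j t : ℤ) : (X C j t).Normal :=
  (Cplus_normal C (t - j)).map _ (MonoidHom.rangeRestrict_surjective _)

instance Y_normal (C : Subgroup (∀ t, A t)) (i t : ℤ) : (Y C i t).Normal :=
  (Cminus_normal C (t + i + 1)).map _ (MonoidHom.rangeRestrict_surjective _)

/-- `Δ_k^t = X_0^t ∩ Y_k^t`. -/
def Del (C : Subgroup (∀ t, A t)) (k t : ℤ) : Subgroup ↥(Branch C t) :=
  X C 0 t ⊓ Y C k t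

/-- `D_k^t = {a ∈ C : β^t(a) ∈ Δ_k^t}`. -/
def D (C : Subgroup (∀ t, A t)) (k t : ℤ) : Subgroup ↥C :=
  (Del C k t).comap (betaRes C t)

/-- Following-branch operator: for `S ⊆ B^{t₁}`,
`FSet C t₁ t₂ S = {β^{t₂}(a) : a ∈ C, β^{t₁}(a) ∈ S}`. -/
def FSet (C : Subgroup (∀ t, A t)) (t₁ t₂ : ℤ) (S : Set ↥(Branch C t₁)) :
    Set ↥(Branch C t₂) :=
  {x | ∃ a : ↥C, betaRes C t₁ a ∈ S ∧ betaRes C t₂ a = x}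

/-- `π^{[t,t+k]} : C → B^t × ⋯ × B^{t+k}`, `a ↦ (β^t(a), …, β^{t+k}(a))`. -/
def piSeg (C : Subgroup (∀ t, A t)) (t : ℤ) (k : ℕ) :
    ↥C →* ∀ j : Fin (k + 1), ↥(Branch C (t + ((j : ℕ) : ℤ))) where
  toFun a := fun j => betaRes C (t + ((j : ℕ) : ℤ)) a
  map_one' := by funext j; simp
  map_mul' a b := by funext j; simp

/-- `π^{[t,t+k]}(D_m^t)`. -/
def Pseg (C : Subgroup (∀ t, A t)) (t : ℤ) (k : ℕ) (m : ℤ) :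
    Subgroup (∀ j : Fin (k + 1), ↥(Branch C (t + ((j : ℕ) : ℤ)))) :=
  (D C m t).map (piSeg C t k)

/-- `β^{t+j}(D_m^t)` : the image of `D_m^t` in the branch group at time `t + j`. -/
def Qb (C : Subgroup (∀ t, A t)) (t m j : ℤ) : Subgroup ↥(Branch C (t + j)) :=
  (D C m t).map (betaRes C (t + j))

/-- The normal subgroup `C^{[t,t+k−1]}C^{[t+1,t+k]}` of `C` (denominator of the granule). -/
def granN (C : Subgroup (∀ t, A t)) (t : ℤ) (k : ℕ) : Subgroup ↥C :=
  Cint C t (t + k - 1) ⊔ Cint C (t + 1) (t + k)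

instance granN_normal (C : Subgroup (∀ t, A t)) (t : ℤ) (k : ℕ) : (granN C t k).Normal :=
  Subgroup.sup_normal _ _

lemma mem_D_of_mem_Cint (C : Subgroup (∀ t, A t)) (t : ℤ) (k : ℕ) {a : ↥C}
    (ha : a ∈ Cint C t (t + k)) : a ∈ D C (k : ℤ) t := by
  rcases Subgroup.mem_inf.mp ha with ⟨h1, h2⟩
  refine Subgroup.mem_comap.mpr (Subgroup.mem_inf.mpr ⟨?_, ?_⟩)
  · exact Subgroup.mem_map.mpr ⟨a, by simpa using h1, rfl⟩
  · exact Subgroup.mem_map.mpr ⟨a, h2, rfl⟩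

/-- `ℓ`-controllability of the group system `C`. -/
def Controllable (C : Subgroup (∀ t, A t)) (ℓ : ℕ) : Prop :=
  ∀ a b : ↥C, ∀ t : ℤ, ∃ c : ↥C,
    (∀ n < t, (c : ∀ s, A s) n = (a : ∀ s, A s) n) ∧
    (∀ n, t + (ℓ : ℤ) ≤ n → (c : ∀ s, A s) n = (b : ∀ s, A s) n)


/-- Kernel of the branch homomorphism: `ker β^s ≤ C^{s−} C^{(s+1)+}`. -/
lemma exists_of_betaRes_eq_one (C : Subgroup (∀ t, A t)) (s : ℤ) {a : ↥C}
    (ha : betaRes C s a = 1) :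
    ∃ m ∈ Cminus C s, ∃ p ∈ Cplus C (s + 1), m * p = a := by
  have hb : beta C s a = 1 := congrArg Subtype.val ha
  have h1 : sigma C s a = 1 := congrArg Prod.fst hb
  have h2 : (a : ∀ r, A r) s = 1 := congrArg (fun x => x.2.1) hb
  have h3 : a ∈ stateN C s := (QuotientGroup.eq_one_iff a).mp h1
  obtain ⟨m, hm, p, hp, rfl⟩ := Subgroup.mem_sup_of_normal_left.mp h3
  refine ⟨m, hm, p, ?_, rfl⟩
  intro n hn
  rcases lt_or_eq_of_le (Int.lt_add_one_iff.mp hn) with h | h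
  · exact hp n h
  · subst h
    have := hm n le_rfl
    simpa [this] using h2

lemma Cplus_anti (C : Subgroup (∀ t, A t)) {s s' : ℤ} (h : s ≤ s') :
    Cplus C s' ≤ Cplus C s := fun _ ha n hn => ha n (lt_of_lt_of_le hn h)

lemma Cminus_mono (C : Subgroup (∀ t, A t)) {s s' : ℤ} (h : s ≤ s') :
    Cminus C s ≤ Cminus C s' := fun _ ha n hn => ha n (le_trans h hn)

lemma betaRes_eq_one_of_Cplus (C : Subgroup (∀ t, A t)) (s : ℤ) {a : ↥C}
    (ha : a ∈ Cplus C (s + 1)) : betaRes C s a = 1 := by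
  apply Subtype.ext
  have h1 : sigma C s a = 1 := (QuotientGroup.eq_one_iff a).mpr
    (Subgroup.mem_sup_right (Cplus_anti C (by omega) ha))
  have h2 : evalHom C s a = 1 := ha s (by omega)
  have h3 : sigma C (s + 1) a = 1 := (QuotientGroup.eq_one_iff a).mpr
    (Subgroup.mem_sup_right ha)
  exact Prod.ext h1 (Prod.ext h2 h3)

lemma mem_Y_of_betaRes (C : Subgroup (∀ t, A t)) (t : ℤ) (k j : ℕ) (hj : j ≤ k) {a : ↥C}
    (ha : betaRes C (t + (j : ℤ)) a = 1) : betaRes C t a ∈ Y C ((k : ℤ) - 1) t := by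
  obtain ⟨m, hm, p, hp, rfl⟩ := exists_of_betaRes_eq_one C _ ha
  rw [map_mul, betaRes_eq_one_of_Cplus C t (Cplus_anti C (by omega) hp), mul_one]
  exact Subgroup.mem_map.mpr ⟨m, Cminus_mono C (by omega) hm, rfl⟩

/-- `f(D)/f(N)` for `N` normal and `ker f ∩ D ≤ N`. -/
lemma map_subgroupOf_normal {G H : Type*} [Group G] [Group H] (f : G →* H)
    (N E : Subgroup G) [hN : N.Normal] : ((N.map f).subgroupOf (E.map f)).Normal := by
  constructor
  rintro ⟨_, x, hx, rfl⟩ hn ⟨_, y, hy, rfl⟩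
  obtain ⟨n, hn, hnx⟩ := Subgroup.mem_subgroupOf.mp hn
  refine Subgroup.mem_subgroupOf.mpr ⟨y * n * y⁻¹, hN.conj_mem n hn y, ?_⟩
  simp only [map_mul, map_inv, Subgroup.coe_mul, Subgroup.coe_inv]
  rw [hnx]

lemma nonempty_quot_equiv {G H : Type*} [Group G] [Group H] (f : G →* H)
    (N E : Subgroup G) [hN : N.Normal] (hNE : N ≤ E)
    (hker : ∀ a ∈ E, f a = 1 → a ∈ N)
    (h : ((N.map f).subgroupOf (E.map f)).Normal) :
    Nonempty ((↥E ⧸ N.subgroupOf E) ≃* (↥(E.map f) ⧸ (N.map f).subgroupOf (E.map f))) := by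
  let φ : ↥E →* (↥(E.map f) ⧸ (N.map f).subgroupOf (E.map f)) :=
    (QuotientGroup.mk' _).comp (f.subgroupMap E)
  have hφ : Function.Surjective φ :=
    (QuotientGroup.mk'_surjective _).comp (f.subgroupMap_surjective E)
  have hk : N.subgroupOf E = φ.ker := by
    ext x
    have hx : x ∈ φ.ker ↔ f x ∈ N.map f := by
      rw [MonoidHom.mem_ker]
      exact (QuotientGroup.eq_one_iff _).trans Subgroup.mem_subgroupOf
    rw [hx, Subgroup.mem_subgroupOf]
    constructor
    · exact fun h => ⟨x, h, rfl⟩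
    · rintro ⟨n, hn, hnx⟩
      have := hker (n⁻¹ * x) (E.mul_mem (E.inv_mem (hNE hn)) x.2) (by simp [hnx])
      simpa using N.mul_mem hn this
  exact ⟨(QuotientGroup.quotientMulEquivOfEq hk).trans
    (QuotientGroup.quotientKerEquivOfSurjective φ hφ)⟩

lemma Del_eq_map (C : Subgroup (∀ t, A t)) (k t : ℤ) :
    Del C k t = (D C k t).map (betaRes C t) :=
  (Subgroup.map_comap_eq_self_of_surjective (MonoidHom.rangeRestrict_surjective _) _).symm

instance D_normal (C : Subgroup (∀ t, A t)) (k t : ℤ) : (D C k t).Normal := by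
  unfold D Del
  infer_instance

/-- `Δ_{k−1}^t` is normal in `Δ_k^t`, and for every `0 ≤ j ≤ k` there are
isomorphisms `Δ_k^t/Δ_{k−1}^t ≅ π^{[t,t+k]}(D_k^t)/π^{[t,t+k]}(D_{k−1}^t)
≅ β^{t+j}(D_k^t)/β^{t+j}(D_{k−1}^t)`; in particular all the latter quotients, for
`0 ≤ j ≤ k`, have the same cardinality. -/
theorem statement15 (C : Subgroup (∀ t, A t)) (t : ℤ) (k : ℕ) (hk : 1 ≤ k) :
    ((Del C ((k : ℤ) - 1) t).subgroupOf (Del C (k : ℤ) t)).Normal ∧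
    (∀ j : ℕ, j ≤ k →
      ((Pseg C t k ((k : ℤ) - 1)).subgroupOf (Pseg C t k (k : ℤ))).Normal ∧
      ((Qb C t ((k : ℤ) - 1) (j : ℤ)).subgroupOf (Qb C t (k : ℤ) (j : ℤ))).Normal ∧
      ∀ (h0 : ((Del C ((k : ℤ) - 1) t).subgroupOf (Del C (k : ℤ) t)).Normal)
        (h1 : ((Pseg C t k ((k : ℤ) - 1)).subgroupOf (Pseg C t k (k : ℤ))).Normal)
        (h2 : ((Qb C t ((k : ℤ) - 1) (j : ℤ)).subgroupOf (Qb C t (k : ℤ) (j : ℤ))).Normal),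
        haveI := h0
        haveI := h1
        haveI := h2
        Nonempty
          ((↥(Del C (k : ℤ) t) ⧸ (Del C ((k : ℤ) - 1) t).subgroupOf (Del C (k : ℤ) t)) ≃*
           (↥(Pseg C t k (k : ℤ)) ⧸
              (Pseg C t k ((k : ℤ) - 1)).subgroupOf (Pseg C t k (k : ℤ)))) ∧
        Nonempty
          ((↥(Pseg C t k (k : ℤ)) ⧸
              (Pseg C t k ((k : ℤ) - 1)).subgroupOf (Pseg C t k (k : ℤ))) ≃*
           (↥(Qb C t (k : ℤ) (j : ℤ)) ⧸
              (Qb C t ((k : ℤ) - 1) (j : ℤ)).subgroupOf (Qb C t (k : ℤ) (j : ℤ))))) ∧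
    (∀ j j' : ℕ, j ≤ k → j' ≤ k →
      Nat.card
          (↥(Qb C t (k : ℤ) (j : ℤ)) ⧸
            (Qb C t ((k : ℤ) - 1) (j : ℤ)).subgroupOf (Qb C t (k : ℤ) (j : ℤ))) =
        Nat.card
          (↥(Qb C t (k : ℤ) (j' : ℤ)) ⧸
            (Qb C t ((k : ℤ) - 1) (j' : ℤ)).subgroupOf (Qb C t (k : ℤ) (j' : ℤ)))) := by
  have hle : D C ((k : ℤ) - 1) t ≤ D C (k : ℤ) t :=
    Subgroup.comap_mono (inf_le_inf_left _ (Subgroup.map_mono (Cminus_mono C (by omega))))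
  have hmem : ∀ j : ℕ, j ≤ k → ∀ a ∈ D C (k : ℤ) t, betaRes C (t + (j : ℤ)) a = 1 →
      a ∈ D C ((k : ℤ) - 1) t := fun j hj a ha h =>
    ⟨ha.1, mem_Y_of_betaRes C t k j hj h⟩
  have hP : ∀ a ∈ D C (k : ℤ) t, piSeg C t k a = 1 → a ∈ D C ((k : ℤ) - 1) t :=
    fun a ha h => hmem 0 (Nat.zero_le _) a ha (congrFun h 0)
  have hB : ∀ a ∈ D C (k : ℤ) t, betaRes C t a = 1 → a ∈ D C ((k : ℤ) - 1) t :=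
    fun a _ h => Subgroup.mem_comap.mpr (h ▸ Subgroup.one_mem _)
  have n1 : ((Pseg C t k ((k : ℤ) - 1)).subgroupOf (Pseg C t k (k : ℤ))).Normal :=
    map_subgroupOf_normal _ _ _
  have n2 : ∀ j : ℕ,
      ((Qb C t ((k : ℤ) - 1) (j : ℤ)).subgroupOf (Qb C t (k : ℤ) (j : ℤ))).Normal :=
    fun j => map_subgroupOf_normal _ _ _
  refine ⟨?_, ?_, ?_⟩
  · rw [Del_eq_map, Del_eq_map]
    exact map_subgroupOf_normal _ _ _
  · intro j hj
    refine ⟨n1, n2 j, ?_⟩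
    intro h0 h1 h2
    obtain ⟨e1⟩ : Nonempty ((↥(D C (k : ℤ) t) ⧸ (D C ((k : ℤ) - 1) t).subgroupOf (D C (k : ℤ) t)) ≃*
        (↥(Pseg C t k (k : ℤ)) ⧸
          (Pseg C t k ((k : ℤ) - 1)).subgroupOf (Pseg C t k (k : ℤ)))) :=
      nonempty_quot_equiv (piSeg C t k) _ _ hle hP h1
    obtain ⟨e2⟩ : Nonempty ((↥(D C (k : ℤ) t) ⧸ (D C ((k : ℤ) - 1) t).subgroupOf (D C (k : ℤ) t)) ≃*
        (↥(Qb C t (k : ℤ) (j : ℤ)) ⧸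
          (Qb C t ((k : ℤ) - 1) (j : ℤ)).subgroupOf (Qb C t (k : ℤ) (j : ℤ)))) :=
      nonempty_quot_equiv (betaRes C (t + (j : ℤ))) _ _ hle (hmem j hj) h2
    refine ⟨?_, ⟨e1.symm.trans e2⟩⟩
    have key : Nonempty ((↥(D C (k : ℤ) t) ⧸ (D C ((k : ℤ) - 1) t).subgroupOf (D C (k : ℤ) t)) ≃*
        (↥(Del C (k : ℤ) t) ⧸ (Del C ((k : ℤ) - 1) t).subgroupOf (Del C (k : ℤ) t))) := by
      revert h0
      rw [Del_eq_map C k t, Del_eq_map C (k - 1) t]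
      intro h0
      exact nonempty_quot_equiv (betaRes C t) _ _ hle hB h0
    obtain ⟨e0⟩ := key
    exact ⟨e0.symm.trans e1⟩
  · have hc : ∀ j : ℕ, j ≤ k →
        Nat.card (↥(D C (k : ℤ) t) ⧸ (D C ((k : ℤ) - 1) t).subgroupOf (D C (k : ℤ) t)) =
        Nat.card (↥(Qb C t (k : ℤ) (j : ℤ)) ⧸
          (Qb C t ((k : ℤ) - 1) (j : ℤ)).subgroupOf (Qb C t (k : ℤ) (j : ℤ))) := by
      intro j hj
      haveI := n2 j
      obtain ⟨e⟩ : Nonempty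
          ((↥(D C (k : ℤ) t) ⧸ (D C ((k : ℤ) - 1) t).subgroupOf (D C (k : ℤ) t)) ≃*
          (↥(Qb C t (k : ℤ) (j : ℤ)) ⧸
            (Qb C t ((k : ℤ) - 1) (j : ℤ)).subgroupOf (Qb C t (k : ℤ) (j : ℤ)))) :=
        nonempty_quot_equiv (betaRes C (t + (j : ℤ))) _ _ hle (hmem j hj) (n2 j)
      exact Nat.card_congr e.toEquiv
    intro j j' hj hj'
    exact (hc j hj).symm.trans (hc j' hj')

end GroupSystemPaper
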